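/- arXiv:1705.01916 — 2 statements merged into one kernel-verified Lean document; each statement's English description precedes it below -/
import Mathlib

section
/- For every integer d ≥ 1 there is a constant c_d > 0, depending only on d, such that for all y, z ∈ ℤ^d: Σ_{x ∈ ℤ^d} ( max( diam({x, y, z}), 1 ) )^{−(d+1)} ≤ c_d · ( max( |y − z|, 1 ) )^{−1}, where |·| is the ℓ¹ norm on ℤ^d and diam is the ℓ¹ diameter of a finite set. -/
noncomputable section

open scoped BigOperators

/-- ℓ¹ distance on `ℤ^d` (natural-number valued). -/
def dist1 {d : ℕ} (x y : Fin d → ℤ) : ℕ := ∑ i, (x i - y i).natAbs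

/-- ℓ¹ diameter of the three-point set `{x, y, z}`. -/
def diam3 {d : ℕ} (x y z : Fin d → ℤ) : ℕ :=
  max (dist1 x y) (max (dist1 x z) (dist1 y z))

lemma one_dim_bound (p : ℝ) (hp : 1 < p) : ∃ C : ℝ, 0 < C ∧ ∀ R : ℕ, 1 ≤ R →
    Summable (fun k : ℤ => (max (R : ℝ) |(k : ℝ)|) ^ (-p)) ∧
    ∑' k : ℤ, (max (R : ℝ) |(k : ℝ)|) ^ (-p) ≤ C * (R : ℝ) ^ (1 - p) := by
  have hg : Summable (fun q : ℤ => (max (1 : ℝ) |(q : ℝ)|) ^ (-p)) := by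
    have h1 : Summable (fun q : ℤ => |(q : ℝ)| ^ (-p)) := Real.summable_abs_int_rpow hp
    have h2 : Summable (fun q : ℤ => if q = 0 then (1 : ℝ) else 0) :=
      (hasSum_ite_eq (0 : ℤ) (1 : ℝ)).summable
    refine Summable.of_nonneg_of_le (fun q => by positivity) (fun q => ?_) (h1.add h2)
    by_cases hq : q = 0
    · subst hq
      simp
      positivity
    · have : (1 : ℝ) ≤ |(q : ℝ)| := by
        have := Int.one_le_abs hq
        exact_mod_cast this
      simp [hq, max_eq_right this]
  set G := ∑' q : ℤ, (max (1 : ℝ) |(q : ℝ)|) ^ (-p) with hG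
  have hGpos : 0 ≤ G := tsum_nonneg (fun q => by positivity)
  refine ⟨2 ^ p * G + 1, by positivity, fun R hR => ?_⟩
  have : NeZero R := ⟨by omega⟩
  have hR0 : (0 : ℝ) < R := by exact_mod_cast hR
  have hone : Summable (fun _ : Fin R => (2 : ℝ) ^ p * (R : ℝ) ^ (-p)) :=
    (hasSum_fintype _).summable
  have hS := summable_mul_of_summable_norm hg.norm hone.norm
  have hT := tsum_mul_tsum_of_summable_norm hg.norm hone.norm
  let e := Int.divModEquiv R
  have key : ∀ k : ℤ, (max (R : ℝ) |(k : ℝ)|) ^ (-p) ≤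
      (max (1 : ℝ) |((e k).1 : ℝ)|) ^ (-p) * ((2 : ℝ) ^ p * (R : ℝ) ^ (-p)) := by
    intro k
    have he : (e k).1 = k / R := rfl
    rw [he]
    have hRz : (0 : ℤ) < R := by exact_mod_cast hR
    have h1 := Int.mul_ediv_add_emod k R
    have h2 := Int.emod_nonneg k hRz.ne'
    have h3 := Int.emod_lt_of_pos k hRz
    generalize k / (R : ℤ) = q at *
    generalize k % (R : ℤ) = r at *
    have hb : (R : ℝ) * max 1 |(q : ℝ)| * (1 / 2) ≤ max (R : ℝ) |(k : ℝ)| := by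
      have hz : (R : ℤ) * max 1 |q| ≤ 2 * max (R : ℤ) |k| := by
        have a1 := le_max_left (R : ℤ) |k|
        have a2 := le_max_right (R : ℤ) |k|
        have a3 := neg_abs_le k
        have a4 := le_abs_self k
        have a5 : (R : ℤ) * |q| ≤ |k| + R := by
          rcases abs_cases q with ⟨h, _⟩ | ⟨h, _⟩ <;> rw [h] <;> nlinarith
        rcases max_cases 1 |q| with ⟨h, _⟩ | ⟨h, _⟩ <;> rw [h] <;> nlinarith
      have : ((R : ℝ) * max 1 |(q : ℝ)|) ≤ 2 * max (R : ℝ) |(k : ℝ)| := by exact_mod_cast hz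
      linarith
    calc (max (R : ℝ) |(k : ℝ)|) ^ (-p) ≤ ((R : ℝ) * max 1 |(q : ℝ)| * (1 / 2)) ^ (-p) :=
          Real.rpow_le_rpow_of_nonpos (by positivity) hb (by linarith)
      _ = _ := by
          rw [Real.mul_rpow (by positivity) (by positivity),
            Real.mul_rpow (by positivity) (by positivity), one_div,
            Real.inv_rpow (by norm_num), Real.rpow_neg (by norm_num : (0:ℝ) ≤ 2), inv_inv]
          ring
  have hS' := (e.summable_iff (f := fun x : ℤ × Fin R =>
    (max (1 : ℝ) |(x.1 : ℝ)|) ^ (-p) * ((2 : ℝ) ^ p * (R : ℝ) ^ (-p)))).2 hS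
  have hs : Summable (fun k : ℤ => (max (R : ℝ) |(k : ℝ)|) ^ (-p)) :=
    Summable.of_nonneg_of_le (fun k => by positivity) key hS'
  refine ⟨hs, ?_⟩
  calc _ ≤ _ := hs.tsum_le_tsum key hS'
    _ = _ := e.tsum_eq (fun x : ℤ × Fin R =>
        (max (1 : ℝ) |(x.1 : ℝ)|) ^ (-p) * ((2 : ℝ) ^ p * (R : ℝ) ^ (-p)))
    _ = _ := hT.symm
    _ = 2 ^ p * G * (R : ℝ) ^ (1 - p) := by
        rw [← hG, tsum_fintype, Finset.sum_const, Finset.card_univ, Fintype.card_fin, nsmul_eq_mul,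
          sub_eq_add_neg, Real.rpow_add hR0, Real.rpow_one]
        ring
    _ ≤ _ := by
        have : 0 < (R : ℝ) ^ (1 - p) := by positivity
        nlinarith

/-- **Summation lemma** (inequality (4.22) in the text): for every `d ≥ 1` there is a
constant `c_d > 0` depending only on `d` such that for all `y, z ∈ ℤ^d`,
`∑_x (max(diam{x,y,z},1))^{-(d+1)} ≤ c_d (max(|y-z|,1))^{-1}`. -/
theorem three_point_sum_bound (d : ℕ) (hd : 1 ≤ d) :
    ∃ c : ℝ, 0 < c ∧ ∀ y z : Fin d → ℤ,
      Summable (fun x : Fin d → ℤ =>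
        ((max (diam3 x y z) 1 : ℕ) : ℝ) ^ (-((d : ℤ) + 1))) ∧
      ∑' x : Fin d → ℤ, ((max (diam3 x y z) 1 : ℕ) : ℝ) ^ (-((d : ℤ) + 1))
        ≤ c * (((max (dist1 y z) 1 : ℕ) : ℝ))⁻¹ := by
  have hd0 : (0 : ℝ) < d := by exact_mod_cast hd
  obtain ⟨C, hC, H⟩ := one_dim_bound (((d : ℝ) + 1) / d) (by rw [lt_div_iff₀ hd0]; linarith)
  set p : ℝ := ((d : ℝ) + 1) / d with hp
  have hp0 : 0 < p := by positivity
  refine ⟨C ^ d, by positivity, fun y z => ?_⟩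
  set R : ℕ := max (dist1 y z) 1 with hRdef
  have hR : 1 ≤ R := le_max_right _ _
  have hR0 : (0 : ℝ) < R := by exact_mod_cast hR
  obtain ⟨hs, hle⟩ := H R hR
  have hterm : ∀ x : Fin d → ℤ, ((max (diam3 x y z) 1 : ℕ) : ℝ) ^ (-((d : ℤ) + 1)) ≤
      ∏ i, (max (R : ℝ) |((x i - y i : ℤ) : ℝ)|) ^ (-p) := by
    intro x
    set m : ℕ := max (diam3 x y z) 1 with hm
    have hm1 : 1 ≤ m := le_max_right _ _
    have hm0 : (0 : ℝ) < m := by exact_mod_cast hm1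
    have hRm : R ≤ m := by
      simp only [hRdef, hm, diam3]; omega
    have e1 : (m : ℝ) ^ (-((d : ℤ) + 1)) = ∏ _i : Fin d, (m : ℝ) ^ (-p) := by
      rw [Finset.prod_const, Finset.card_univ, Fintype.card_fin, ← Real.rpow_intCast,
        ← Real.rpow_mul_natCast hm0.le]
      congr 1
      push_cast
      rw [hp]; field_simp
    rw [e1]
    refine Finset.prod_le_prod (fun i _ => by positivity) (fun i _ => ?_)
    refine Real.rpow_le_rpow_of_nonpos (by positivity) ?_ (by linarith)
    refine max_le (by exact_mod_cast hRm) ?_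
    have h1 : (x i - y i).natAbs ≤ m := by
      have : (x i - y i).natAbs ≤ dist1 x y :=
        Finset.single_le_sum (f := fun i => (x i - y i).natAbs) (fun _ _ => Nat.zero_le _)
          (Finset.mem_univ i)
      simp only [hm, diam3]; omega
    have h2 : |x i - y i| ≤ (m : ℤ) := by rw [Int.abs_eq_natAbs]; exact_mod_cast h1
    exact_mod_cast h2
  have hfin : ∀ s : Finset (Fin d → ℤ),
      ∑ x ∈ s, ((max (diam3 x y z) 1 : ℕ) : ℝ) ^ (-((d : ℤ) + 1)) ≤ C ^ d * (R : ℝ)⁻¹ := by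
    intro s
    let t : Fin d → Finset ℤ := fun i => s.image (fun x => x i)
    calc _ ≤ ∑ x ∈ s, ∏ i, (max (R : ℝ) |((x i - y i : ℤ) : ℝ)|) ^ (-p) :=
          Finset.sum_le_sum (fun x _ => hterm x)
      _ ≤ ∑ x ∈ Fintype.piFinset t, ∏ i, (max (R : ℝ) |((x i - y i : ℤ) : ℝ)|) ^ (-p) := by
          refine Finset.sum_le_sum_of_subset_of_nonneg ?_ (fun x _ _ => by positivity)
          intro x hx
          exact Fintype.mem_piFinset.2 (fun i => Finset.mem_image_of_mem _ hx)
      _ = ∏ i, ∑ k ∈ t i, (max (R : ℝ) |((k - y i : ℤ) : ℝ)|) ^ (-p) :=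
          (Finset.prod_univ_sum t (fun i k => (max (R : ℝ) |((k - y i : ℤ) : ℝ)|) ^ (-p))).symm
      _ ≤ ∏ _i : Fin d, (C * (R : ℝ) ^ (1 - p)) := by
          refine Finset.prod_le_prod (fun i _ => Finset.sum_nonneg fun k _ => by positivity)
            (fun i _ => le_trans ?_ hle)
          have hs' := ((Equiv.subRight (y i)).summable_iff
            (f := fun k : ℤ => (max (R : ℝ) |(k : ℝ)|) ^ (-p))).2 hs
          rw [← (Equiv.subRight (y i)).tsum_eq (fun k : ℤ => (max (R : ℝ) |(k : ℝ)|) ^ (-p))]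
          exact hs'.sum_le_tsum (t i) (fun k _ => Real.rpow_nonneg (le_max_of_le_right (abs_nonneg _)) _)
      _ = _ := by
          rw [Finset.prod_const, Finset.card_univ, Fintype.card_fin, mul_pow,
            ← Real.rpow_mul_natCast hR0.le, ← Real.rpow_neg_one]
          congr 2
          rw [hp]; field_simp; ring
  have hsum := summable_of_sum_le (fun x => by positivity) hfin
  exact ⟨hsum, hsum.tsum_le_of_sum_le hfin⟩
end
end

section
/- There exists ε₀ ∈ (0,1), depending only on the dimension d ≥ 1, such that the following holds. Let Λ ⊂ ℤ^d be a finite rectangle, v : Λ → [0,1], ε ∈ (0, ε₀], γ ∈ (0, ε^{20}], ε₁ = ε/3, E ∈ ℝ, and λ ∈ ℝ with |λ − E| ≤ ε₁/2. Let R = { x ∈ Λ : |v_x + 2dγ − E| ≤ ε₁ }, assume ∅ ≠ R ≠ Λ, and let B, C = Bᵀ, D be the off-diagonal and lower-right blocks of H with respect to the partition Λ = R ∪ (Λ∖R). Then D − λ·I is invertible and for all x, y ∈ R: | ( B (D − λ)^{−1} C )_{x y} | ≤ (1/2) · γ^{0.9 · max(|x−y|, 2)}. -/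
noncomputable section

open scoped BigOperators

lemma dist1_comm {d : ℕ} (x y : Fin d → ℤ) : dist1 x y = dist1 y x :=
  Finset.sum_congr rfl fun i _ => by rw [← Int.natAbs_neg, neg_sub]

/-- ℓ¹ diameter of a finite subset of `ℤ^d`. -/
def diam1 {d : ℕ} (Λ : Finset (Fin d → ℤ)) : ℕ := (Λ ×ˢ Λ).sup fun p => dist1 p.1 p.2

/-- `Λ` is a (possibly empty) rectangle: a product of integer intervals. -/
def IsRect {d : ℕ} (Λ : Finset (Fin d → ℤ)) : Prop := ∃ a b : Fin d → ℤ, Λ = Finset.Icc a b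

/-- Entry of the Anderson Hamiltonian `H = H₀ - γ J` with potential `v`. -/
def hamEntry (d : ℕ) (γ : ℝ) (v : (Fin d → ℤ) → ℝ) (x y : Fin d → ℤ) : ℝ :=
  (if x = y then 2*d*γ + v x else 0) - γ * (if dist1 x y = 1 then 1 else 0)

/-- The Anderson Hamiltonian restricted to a finite set `X ⊂ ℤ^d`. -/
def hamOn (d : ℕ) (γ : ℝ) (v : (Fin d → ℤ) → ℝ) (X : Finset (Fin d → ℤ)) :
    Matrix X X ℝ := Matrix.of fun x y => hamEntry d γ v x y

lemma hamOn_isHermitian (d : ℕ) (γ : ℝ) (v : (Fin d → ℤ) → ℝ) (X : Finset (Fin d → ℤ)) :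
    (hamOn d γ v X).IsHermitian := by
  ext x y
  simp only [Matrix.conjTranspose_apply, hamOn, Matrix.of_apply, hamEntry, star_trivial]
  rw [dist1_comm]
  by_cases h : (y : Fin d → ℤ) = (x : Fin d → ℤ)
  · rw [if_pos h, if_pos h.symm, h]
  · rw [if_neg h, if_neg (show ¬((x : Fin d → ℤ) = (y : Fin d → ℤ)) from fun hh => h hh.symm)]

open scoped Classical in
/-- Number of eigenvalues (with multiplicity) of a Hermitian matrix in `[a,b]`. -/
def countEigIn {n : Type*} [Fintype n] [DecidableEq n] {M : Matrix n n ℝ}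
    (hM : M.IsHermitian) (a b : ℝ) : ℕ :=
  (Finset.univ.filter fun i => hM.eigenvalues i ∈ Set.Icc a b).card

/-- Expectation with respect to the uniform measure on a finite configuration space. -/
def expect {Ω : Type*} [Fintype Ω] (f : Ω → ℝ) : ℝ := (∑ ω, f ω) / Fintype.card Ω

open scoped Classical in
/-- Probability of an event with respect to the uniform measure on a finite space. -/
def prob {Ω : Type*} [Fintype Ω] (A : Ω → Prop) : ℝ :=
  ((Finset.univ.filter A).card : ℝ) / Fintype.card Ω

/-- The random potential determined by a configuration `ω : Λ → Fin N`:
the value at `x ∈ Λ` is `ω x / (N-1) ∈ {0, 1/(N-1), …, 1}`. -/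
def potential {d : ℕ} (N : ℕ) (Λ : Finset (Fin d → ℤ)) (ω : Λ → Fin N) :
    (Fin d → ℤ) → ℝ := fun x => if h : x ∈ Λ then (ω ⟨x, h⟩ : ℕ) / ((N : ℝ) - 1) else 0


/-- The off-diagonal block of the Hamiltonian between two index sets. -/
def hamBlock (d : ℕ) (γ : ℝ) (v : (Fin d → ℤ) → ℝ)
    (X Y : Finset (Fin d → ℤ)) : Matrix X Y ℝ :=
  Matrix.of fun x y => hamEntry d γ v x y

lemma dist1_tri {d : ℕ} (x y z : Fin d → ℤ) : dist1 x z ≤ dist1 x y + dist1 y z := by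
  unfold dist1
  rw [← Finset.sum_add_distrib]
  refine Finset.sum_le_sum fun i _ => ?_
  omega

lemma dist1_self' {d : ℕ} (x : Fin d → ℤ) : dist1 x x = 0 := by
  simp [dist1]

lemma dist1_pos' {d : ℕ} {x y : Fin d → ℤ} (h : x ≠ y) : 1 ≤ dist1 x y := by
  by_contra hc
  apply h
  have h0 : dist1 x y = 0 := by omega
  unfold dist1 at h0
  rw [Finset.sum_eq_zero_iff] at h0
  funext i
  have := h0 i (Finset.mem_univ i)
  omega

/-- A lattice point has at most `2d` neighbours. -/
lemma card_nbr {d : ℕ} (X : Finset (Fin d → ℤ)) (x : Fin d → ℤ) :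
    (X.filter fun z => dist1 x z = 1).card ≤ 2 * d := by
  classical
  have hsub : (X.filter fun z => dist1 x z = 1) ⊆
      (Finset.univ : Finset (Fin d × Bool)).image
        (fun p => Function.update x p.1 (if p.2 then x p.1 + 1 else x p.1 - 1)) := by
    intro z hz
    have h1 : dist1 x z = 1 := (Finset.mem_filter.1 hz).2
    unfold dist1 at h1
    obtain ⟨i, -, hi⟩ : ∃ i ∈ Finset.univ, (x i - z i).natAbs ≠ 0 :=
      Finset.exists_ne_zero_of_sum_ne_zero (by omega)
    rw [← Finset.add_sum_erase _ _ (Finset.mem_univ i)] at h1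
    have h2 : ∑ j ∈ Finset.univ.erase i, (x j - z j).natAbs = 0 := by omega
    rw [Finset.sum_eq_zero_iff] at h2
    rw [Finset.mem_image]
    refine ⟨(i, decide (x i < z i)), Finset.mem_univ _, ?_⟩
    funext j
    by_cases hj : j = i
    · subst hj
      simp only [Function.update_self, decide_eq_true_eq]
      have h3 : ((if x j < z j then x j + 1 else x j - 1 : ℤ)) = z j := by
        split_ifs <;> omega
      exact h3
    · rw [Function.update_of_ne hj]
      have := h2 j (Finset.mem_erase.2 ⟨hj, Finset.mem_univ _⟩)
      omega
  refine (Finset.card_le_card hsub).trans (Finset.card_image_le.trans ?_)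
  simp [mul_comm]

/-- Sum over neighbours of a quantity bounded by `b`. -/
lemma nbr_sum_le {d : ℕ} (X : Finset (Fin d → ℤ)) (x : Fin d → ℤ) (u : X → ℝ) (b : ℝ)
    (hb0 : 0 ≤ b) (hb : ∀ z : X, dist1 x z = 1 → |u z| ≤ b) :
    |∑ z : X, (if dist1 x z = 1 then (1 : ℝ) else 0) * u z| ≤ 2 * d * b := by
  classical
  calc |∑ z : X, (if dist1 x z = 1 then (1 : ℝ) else 0) * u z|
      ≤ ∑ z : X, |(if dist1 x z = 1 then (1 : ℝ) else 0) * u z| :=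
        Finset.abs_sum_le_sum_abs _ _
    _ ≤ ∑ z : X, (if dist1 x z = 1 then b else 0) := by
        refine Finset.sum_le_sum fun z _ => ?_
        split_ifs with h
        · simpa using hb z h
        · simp
    _ = ∑ z ∈ X, (if dist1 x z = 1 then b else 0) :=
        Finset.sum_coe_sort X (fun z => if dist1 x z = 1 then b else 0)
    _ = (X.filter fun z => dist1 x z = 1).card * b := by
        rw [← Finset.sum_filter, Finset.sum_const, nsmul_eq_mul]
    _ ≤ 2 * d * b := by
        have : ((X.filter fun z => dist1 x z = 1).card : ℝ) ≤ 2 * d := by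
          exact_mod_cast card_nbr X x
        exact mul_le_mul_of_nonneg_right this hb0

lemma mulVec_ham {d : ℕ} (γ lam : ℝ) (v : (Fin d → ℤ) → ℝ) (X : Finset (Fin d → ℤ))
    (u : X → ℝ) (z : X) :
    ((hamOn d γ v X - lam • (1 : Matrix X X ℝ)).mulVec u) z =
      (v z + 2 * d * γ - lam) * u z -
        γ * ∑ w : X, (if dist1 (z : Fin d → ℤ) w = 1 then (1 : ℝ) else 0) * u w := by
  classical
  have h : ∀ w : X, (hamOn d γ v X - lam • (1 : Matrix X X ℝ)) z w * u w =
      (if z = w then (v z + 2 * d * γ - lam) * u w else 0) -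
        γ * ((if dist1 (z : Fin d → ℤ) w = 1 then (1 : ℝ) else 0) * u w) := by
    intro w
    simp only [Matrix.sub_apply, Matrix.smul_apply, Matrix.one_apply, hamOn, Matrix.of_apply,
      hamEntry, smul_eq_mul, Subtype.coe_inj]
    by_cases hzw : z = w
    · simp only [hzw, if_true]; ring
    · simp only [hzw, if_false]; ring
  simp only [Matrix.mulVec, dotProduct]
  rw [Finset.sum_congr rfl fun w _ => h w, Finset.sum_sub_distrib, Finset.mul_sum]
  simp

/-- Weighted maximum principle. -/
lemma weighted_bound {d : ℕ} (ε t lam A : ℝ) (hε : 0 < ε) (ht : 0 < t) (ht1 : t ≤ 1)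
    (hdt : 24 * d * t ≤ ε) (v : (Fin d → ℤ) → ℝ) (X : Finset (Fin d → ℤ))
    (hX : ∀ z ∈ X, ε / 6 ≤ |v z + 2 * d * t ^ 10 - lam|) (y : Fin d → ℤ) (u : X → ℝ)
    (hu : ∀ z : X, |((hamOn d (t ^ 10) v X - lam • (1 : Matrix X X ℝ)).mulVec u) z| ≤
      A * (t ^ 9) ^ dist1 (z : Fin d → ℤ) y) (z : X) :
    |u z| ≤ 12 / ε * A * (t ^ 9) ^ dist1 (z : Fin d → ℤ) y := by
  have hs : 0 < t ^ 9 := by positivity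
  have hs1 : t ^ 9 ≤ 1 := pow_le_one₀ ht.le ht1
  have hp : ∀ n : ℕ, 0 < (t ^ 9) ^ n := fun n => by positivity
  have : Nonempty X := ⟨z⟩
  obtain ⟨z0, hz0⟩ := Finite.exists_max
    (fun w : X => |u w| / (t ^ 9) ^ dist1 (w : Fin d → ℤ) y)
  set m := |u z0| / (t ^ 9) ^ dist1 (z0 : Fin d → ℤ) y with hm
  have hm0 : 0 ≤ m := by positivity
  have hmu : |u z0| = m * (t ^ 9) ^ dist1 (z0 : Fin d → ℤ) y := by
    rw [hm, div_mul_cancel₀ _ (hp _).ne']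
  have hle : ∀ w : X, |u w| ≤ m * (t ^ 9) ^ dist1 (w : Fin d → ℤ) y := fun w =>
    (div_le_iff₀ (hp _)).1 (hz0 w)
  set P := (t ^ 9) ^ dist1 (z0 : Fin d → ℤ) y with hP
  have hP0 : 0 < P := hp _
  have hsum := nbr_sum_le X (z0 : Fin d → ℤ) u (m * P / t ^ 9) (by positivity) (by
    intro w hw
    rw [le_div_iff₀ hs]
    calc |u w| * t ^ 9 ≤ m * (t ^ 9) ^ dist1 (w : Fin d → ℤ) y * t ^ 9 := by
          gcongr; exact hle w
      _ = m * (t ^ 9) ^ (dist1 (w : Fin d → ℤ) y + 1) := by ring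
      _ ≤ m * P := by
          refine mul_le_mul_of_nonneg_left ?_ hm0
          refine pow_le_pow_of_le_one hs.le hs1 ?_
          have := dist1_tri (z0 : Fin d → ℤ) w y
          omega)
  have h1 := hu z0
  rw [mulVec_ham] at h1
  set S := ∑ w : X, (if dist1 (z0 : Fin d → ℤ) w = 1 then (1 : ℝ) else 0) * u w with hS
  have h2 : |(v z0 + 2 * d * t ^ 10 - lam) * u z0| ≤ A * P + t ^ 10 * |S| := by
    have h3 : (v z0 + 2 * d * t ^ 10 - lam) * u z0 =
      ((v z0 + 2 * d * t ^ 10 - lam) * u z0 - t ^ 10 * S) + t ^ 10 * S := by ring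
    rw [h3]
    refine (abs_add_le _ _).trans (add_le_add h1 ?_)
    rw [abs_mul, abs_of_pos (by positivity : 0 < t ^ 10)]
  have h4 : t ^ 10 * |S| ≤ 2 * d * t * m * P := by
    calc t ^ 10 * |S| ≤ t ^ 10 * (2 * d * (m * P / t ^ 9)) := by gcongr
      _ = 2 * d * t * m * P := by field_simp
  have h5 : ε / 6 * (m * P) ≤ |(v z0 + 2 * d * t ^ 10 - lam) * u z0| := by
    rw [abs_mul, hmu]
    exact mul_le_mul_of_nonneg_right (hX z0 z0.2) (by positivity)
  have h6 : 24 * d * t * (m * P) ≤ ε * (m * P) :=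
    mul_le_mul_of_nonneg_right hdt (by positivity)
  have h7 : (ε / 12 * m) * P ≤ A * P := by nlinarith
  have h8 : ε / 12 * m ≤ A := le_of_mul_le_mul_right h7 hP0
  have h9 : m ≤ 12 / ε * A := by
    rw [div_mul_eq_mul_div, le_div_iff₀ hε]; linarith
  exact (hle z).trans (mul_le_mul_of_nonneg_right h9 (hp _).le)

/-- **Theorem 2.2 for `k = 1`** (first-step random-walk bound, (2.33)):
for `ε` small (depending only on `d`), `γ ≤ ε^20`, `|λ - E| ≤ ε₁/2` with `ε₁ = ε/3`,
and `R` the first-step resonant set, the matrix `D - λ` is invertible and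
`|(B (D-λ)⁻¹ C)_{xy}| ≤ (1/2) γ^{0.9 max(|x-y|,2)}` for all `x, y ∈ R`. -/
theorem first_step_graphical_bound (d : ℕ) (hd : 1 ≤ d) :
    ∃ ε₀ : ℝ, 0 < ε₀ ∧ ε₀ < 1 ∧
    ∀ Λ : Finset (Fin d → ℤ), IsRect Λ →
    ∀ v : (Fin d → ℤ) → ℝ, (∀ x ∈ Λ, v x ∈ Set.Icc (0:ℝ) 1) →
    ∀ ε γ : ℝ, 0 < ε → ε ≤ ε₀ → 0 < γ → γ ≤ ε ^ (20 : ℕ) →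
    ∀ E lam : ℝ, |lam - E| ≤ (ε/3)/2 →
    ∀ R : Finset (Fin d → ℤ),
      (∀ x, x ∈ R ↔ x ∈ Λ ∧ |v x + 2*d*γ - E| ≤ ε/3) →
      R.Nonempty → R ≠ Λ →
    IsUnit (hamOn d γ v (Λ \ R) - lam • (1 : Matrix ↥(Λ \ R) ↥(Λ \ R) ℝ)) ∧
    ∀ x y : ↥R,
      |(hamBlock d γ v R (Λ \ R) *
          (hamOn d γ v (Λ \ R) - lam • (1 : Matrix ↥(Λ \ R) ↥(Λ \ R) ℝ))⁻¹ *
          hamBlock d γ v (Λ \ R) R) x y|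
        ≤ (1/2) * γ ^ ((0.9 : ℝ) *
            ((max (dist1 (x : Fin d → ℤ) (y : Fin d → ℤ)) 2 : ℕ) : ℝ)) := by
  have hdR : (1 : ℝ) ≤ d := by exact_mod_cast hd
  refine ⟨1 / (48 * d), by positivity, ?_, ?_⟩
  · rw [div_lt_one (by positivity)]; linarith
  intro Λ _ v _ ε γ hε hε0 hγ hγε E lam hlam R hR _ _
  have hdε : 48 * d * ε ≤ 1 := by
    rw [le_div_iff₀ (by positivity)] at hε0; linarith
  have hε1 : ε ≤ 1 := by nlinarith
  obtain ⟨t, ht, rfl⟩ : ∃ t : ℝ, 0 < t ∧ t ^ 10 = γ := by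
    refine ⟨γ ^ ((1 : ℝ) / 10), by positivity, ?_⟩
    rw [← Real.rpow_natCast, ← Real.rpow_mul hγ.le]
    norm_num
  have htε : t ≤ ε ^ 2 := by
    refine le_of_pow_le_pow_left₀ (n := 10) (by norm_num) (by positivity) ?_
    calc t ^ 10 ≤ ε ^ 20 := hγε
      _ = (ε ^ 2) ^ 10 := by ring
  have ht1 : t ≤ 1 := htε.trans (pow_le_one₀ hε.le hε1)
  have hdt : 24 * d * t ≤ ε := by
    calc 24 * d * t ≤ 24 * d * ε ^ 2 := by gcongr
      _ = (48 * d * ε) * ε / 2 := by ring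
      _ ≤ 1 * ε / 2 := by gcongr
      _ ≤ ε := by linarith
  have hX : ∀ z ∈ Λ \ R, ε / 6 ≤ |v z + 2 * d * t ^ 10 - lam| := by
    intro z hz
    rw [Finset.mem_sdiff] at hz
    have h1 : ε / 3 < |v z + 2 * d * t ^ 10 - E| := by
      by_contra hc
      exact hz.2 ((hR z).2 ⟨hz.1, not_lt.1 hc⟩)
    have h2 := abs_add_le (v z + 2 * d * t ^ 10 - lam) (lam - E)
    rw [show v z + 2 * d * t ^ 10 - lam + (lam - E) = v z + 2 * d * t ^ 10 - E by ring] at h2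
    linarith
  have hunit : IsUnit (hamOn d (t ^ 10) v (Λ \ R) -
      lam • (1 : Matrix ↥(Λ \ R) ↥(Λ \ R) ℝ)) := by
    rw [← Matrix.mulVec_injective_iff_isUnit]
    intro u w huw
    have h0 : (hamOn d (t ^ 10) v (Λ \ R) -
      lam • (1 : Matrix ↥(Λ \ R) ↥(Λ \ R) ℝ)).mulVec (u - w) = 0 := by
      rw [Matrix.mulVec_sub]; exact sub_eq_zero.2 huw
    funext z
    have := weighted_bound ε t lam 0 hε ht ht1 hdt v (Λ \ R) hX (fun _ => 0) (u - w)
      (by intro z; rw [h0]; simp) z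
    simp only [mul_zero, zero_mul, Pi.sub_apply] at this
    exact sub_eq_zero.1 (abs_nonpos_iff.1 this)
  refine ⟨hunit, ?_⟩
  intro x y
  set M := hamOn d (t ^ 10) v (Λ \ R) - lam • (1 : Matrix ↥(Λ \ R) ↥(Λ \ R) ℝ) with hM
  have hne : ∀ (a : R) (z : ↥(Λ \ R)), (a : Fin d → ℤ) ≠ z := by
    intro a z h
    exact (Finset.mem_sdiff.1 z.2).2 (h ▸ a.2)
  set c : ↥(Λ \ R) → ℝ := fun z => hamBlock d (t ^ 10) v (Λ \ R) R z y with hc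
  set u : ↥(Λ \ R) → ℝ := M⁻¹.mulVec c with hu
  have hMu : M.mulVec u = c := by
    rw [hu, Matrix.mulVec_mulVec, Matrix.mul_nonsing_inv _ ((Matrix.isUnit_iff_isUnit_det _).1 hunit),
      Matrix.one_mulVec]
  have hs : 0 < t ^ 9 := by positivity
  have hs1 : t ^ 9 ≤ 1 := pow_le_one₀ ht.le ht1
  have hub := weighted_bound ε t lam t hε ht ht1 hdt v (Λ \ R) hX (y : Fin d → ℤ) u (by
    intro z
    rw [← hM, hMu]
    simp only [hc, hamBlock, Matrix.of_apply, hamEntry, if_neg (hne y z).symm]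
    by_cases h : dist1 (z : Fin d → ℤ) y = 1
    · rw [h, if_pos rfl, zero_sub, abs_neg, abs_of_pos (by positivity)]
      exact le_of_eq (by ring)
    · rw [if_neg h]
      simp only [mul_zero, sub_zero, abs_zero]
      positivity)
  have hexp : (hamBlock d (t ^ 10) v R (Λ \ R) * M⁻¹ * hamBlock d (t ^ 10) v (Λ \ R) R) x y =
      -(t ^ 10 * ∑ z : ↥(Λ \ R),
        (if dist1 (x : Fin d → ℤ) z = 1 then (1 : ℝ) else 0) * u z) := by
    rw [Matrix.mul_assoc, Matrix.mul_apply, Finset.mul_sum, ← Finset.sum_neg_distrib]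
    refine Finset.sum_congr rfl fun z _ => ?_
    have h1 : (M⁻¹ * hamBlock d (t ^ 10) v (Λ \ R) R) z y = u z := rfl
    rw [h1]
    simp only [hamBlock, Matrix.of_apply, hamEntry, if_neg (hne x z)]
    ring
  set n := max (dist1 (x : Fin d → ℤ) (y : Fin d → ℤ)) 2 with hn
  have hrp : (t ^ 10) ^ ((0.9 : ℝ) * (n : ℝ)) = (t ^ 9) ^ n := by
    rw [Real.rpow_mul (by positivity), Real.rpow_natCast]
    congr 1
    rw [← Real.rpow_natCast, ← Real.rpow_natCast, ← Real.rpow_mul ht.le]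
    norm_num
  rw [hexp, hrp, abs_neg, abs_mul, abs_of_pos (by positivity : 0 < t ^ 10)]
  have hn2 : 2 ≤ n := le_max_right _ _
  have hsum := nbr_sum_le (Λ \ R) (x : Fin d → ℤ) u (12 / ε * t * (t ^ 9) ^ (n - 1))
    (by positivity) (by
      intro z hz
      refine (hub z).trans (mul_le_mul_of_nonneg_left ?_ (by positivity))
      refine pow_le_pow_of_le_one hs.le hs1 ?_
      have h1 := dist1_tri (x : Fin d → ℤ) z y
      have h2 := dist1_pos' (hne y z).symm
      omega)
  calc _ ≤ t ^ 10 * (2 * d * (12 / ε * t * (t ^ 9) ^ (n - 1))) := by gcongr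
    _ = 24 * d * t * t / ε * (t ^ 9) ^ (n - 1 + 1) := by rw [pow_succ]; ring
    _ = 24 * d * t * t / ε * (t ^ 9) ^ n := by rw [Nat.sub_add_cancel (by omega)]
    _ ≤ 1 / 2 * (t ^ 9) ^ n := by
        refine mul_le_mul_of_nonneg_right ?_ (by positivity)
        rw [div_le_iff₀ hε]
        have h1 : t ≤ 1 / 2 := by nlinarith
        calc 24 * d * t * t ≤ ε * (1 / 2) := by gcongr
          _ = 1 / 2 * ε := by ring
end
end
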